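/- Let X be a complex Banach space with dim X > 2, let 𝒩 be a non-trivial nest on X with dim X_-^⊥ > 1, let 𝒜 be a subalgebra of Alg 𝒩 satisfying (♠1)–(♠5), let n ≥ 2, and let L : 𝒜 → B(X) be a Lie n-derivation. Then for all f_1, f_2 ∈ X_-^⊥(𝒜)∖{0} and all y_1, y_2 ∈ X with f_1(y_1) = 1 and f_2(y_2) = 1, there exists c ∈ ℂ such that for every x ∈ X, (L(x⊗f_1) − h(x,f_1)I)y_1 − (L(x⊗f_2) − h(x,f_2)I)y_2 = c x. -/

import Mathlib

open scoped Classical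

set_option synthInstance.maxHeartbeats 1000000
set_option maxHeartbeats 1000000

noncomputable section

/-- The `(n-1)`-th commutator polynomial `p_n(x_1, …, x_n)`, defined recursively by
`p_1(x_1) = x_1` and `p_k(x_1, …, x_k) = [p_{k-1}(x_1, …, x_{k-1}), x_k]`. -/
def commPoly {A : Type*} [NonUnitalNonAssocRing A] : (n : ℕ) → (Fin n → A) → A
  | 0, _ => 0
  | 1, a => a 0
  | n + 2, a =>
      commPoly (n + 1) (fun i => a i.castSucc) * a (Fin.last (n + 1)) -
        a (Fin.last (n + 1)) * commPoly (n + 1) (fun i => a i.castSucc)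

/-- A nest of closed subspaces of `X`: it contains `{0}` and `X`, is totally ordered by
inclusion, is closed under arbitrary intersections, and contains the norm-closed linear
span of the union of any subfamily. -/
structure IsNest {X : Type*} [NormedAddCommGroup X] [NormedSpace ℂ X]
    (𝒩 : Set (Submodule ℂ X)) : Prop where
  closed : ∀ N ∈ 𝒩, IsClosed (N : Set X)
  bot_mem : (⊥ : Submodule ℂ X) ∈ 𝒩
  top_mem : (⊤ : Submodule ℂ X) ∈ 𝒩
  total : ∀ N₁ ∈ 𝒩, ∀ N₂ ∈ 𝒩, N₁ ≤ N₂ ∨ N₂ ≤ N₁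
  sInf_mem : ∀ S ⊆ 𝒩, sInf S ∈ 𝒩
  closure_sSup_mem : ∀ S ⊆ 𝒩, (sSup S).topologicalClosure ∈ 𝒩

/-- The nest algebra `Alg 𝒩` of all bounded operators leaving every member of `𝒩`
invariant. -/
def nestAlgebra {X : Type*} [NormedAddCommGroup X] [NormedSpace ℂ X]
    (𝒩 : Set (Submodule ℂ X)) : Subalgebra ℂ (X →L[ℂ] X) where
  carrier := {T : X →L[ℂ] X | ∀ N ∈ 𝒩, ∀ x ∈ N, T x ∈ N}
  mul_mem' := fun {a b} ha hb N hN x hx => ha N hN _ (hb N hN x hx)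
  one_mem' := fun N _ x hx => hx
  add_mem' := fun {a b} ha hb N hN x hx => N.add_mem (ha N hN x hx) (hb N hN x hx)
  zero_mem' := fun N _ _ _ => N.zero_mem
  algebraMap_mem' := fun r N hN x hx => by
    simpa [Algebra.algebraMap_eq_smul_one] using N.smul_mem r hx

/-- `X₋` : the norm-closed linear span of the union of all members of `𝒩` different
from `X`. -/
def nestXminus {X : Type*} [NormedAddCommGroup X] [NormedSpace ℂ X]
    (𝒩 : Set (Submodule ℂ X)) : Submodule ℂ X :=
  (sSup {N | N ∈ 𝒩 ∧ N ≠ (⊤ : Submodule ℂ X)}).topologicalClosure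

/-- The annihilator of a subspace `S` of `X` inside the continuous dual `X*`. -/
def annihilatorOf {X : Type*} [NormedAddCommGroup X] [NormedSpace ℂ X]
    (S : Submodule ℂ X) : Submodule ℂ (X →L[ℂ] ℂ) where
  carrier := {f | ∀ x ∈ S, f x = 0}
  add_mem' := fun {f g} hf hg x hx => by simp [hf x hx, hg x hx]
  zero_mem' := fun x _ => by simp
  smul_mem' := fun c f hf x hx => by simp [hf x hx]

/-- `X(𝒜)` : the set of `x ∈ X` such that `x ⊗ f ∈ 𝒜` for some nonzero `f ∈ X*`.
Here `x ⊗ f` is the rank-one operator `y ↦ f(y) x`, i.e. `f.smulRight x`. -/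
def XofA {X : Type*} [NormedAddCommGroup X] [NormedSpace ℂ X]
    (𝒜 : NonUnitalSubalgebra ℂ (X →L[ℂ] X)) : Set X :=
  {x | ∃ f : X →L[ℂ] ℂ, f ≠ 0 ∧ f.smulRight x ∈ 𝒜}

/-- `X₋^⊥(𝒜)` : the set of `f ∈ X₋^⊥` such that `x ⊗ f ∈ 𝒜` for some nonzero
`x ∈ X`. -/
def XannA {X : Type*} [NormedAddCommGroup X] [NormedSpace ℂ X]
    (𝒩 : Set (Submodule ℂ X)) (𝒜 : NonUnitalSubalgebra ℂ (X →L[ℂ] X)) :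
    Set (X →L[ℂ] ℂ) :=
  {f | (∀ x ∈ nestXminus 𝒩, f x = 0) ∧ ∃ x : X, x ≠ 0 ∧ f.smulRight x ∈ 𝒜}

/-- `L` is a Lie `n`-derivation from the (not necessarily unital) subalgebra `𝒜` of
`B(X)` into `B(X)`. -/
def IsLieNDerivNU {X : Type*} [NormedAddCommGroup X] [NormedSpace ℂ X]
    (𝒜 : NonUnitalSubalgebra ℂ (X →L[ℂ] X)) (n : ℕ)
    (L : ↥𝒜 →ₗ[ℂ] (X →L[ℂ] X)) : Prop :=
  ∀ a : Fin n → ↥𝒜,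
    L (commPoly n a) =
      ∑ k : Fin n,
        commPoly n (Function.update (fun i => ((a i : X →L[ℂ] X))) k (L (a k)))

/-- The scalar `h(x, f)` attached to a Lie-type derivation `L`: it is `0` when
`f(x) = 0`, and `f(L(x ⊗ f) x) / f(x)` otherwise. -/
def hAux {X : Type*} [NormedAddCommGroup X] [NormedSpace ℂ X]
    (𝒜 : NonUnitalSubalgebra ℂ (X →L[ℂ] X)) (L : ↥𝒜 →ₗ[ℂ] (X →L[ℂ] X))
    (x : X) (f : X →L[ℂ] ℂ) : ℂ :=
  if f x = 0 then 0
  else if hm : f.smulRight x ∈ 𝒜 then f ((L ⟨f.smulRight x, hm⟩) x) / f x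
  else 0

section LieDerivationRankOne

variable {X : Type*} [NormedAddCommGroup X] [NormedSpace ℂ X]

lemma commPoly_succ_succ {A : Type*} [NonUnitalNonAssocRing A] (m : ℕ) (a : Fin (m + 2) → A) :
    commPoly (m + 2) a =
      commPoly (m + 1) (fun i => a i.castSucc) * a (Fin.last (m + 1)) -
        a (Fin.last (m + 1)) * commPoly (m + 1) (fun i => a i.castSucc) := rfl

/-- The tuple `(a, p, …, p)`. -/
def headTuple {A : Type*} (a p : A) (n : ℕ) : Fin n → A :=
  fun i => if (i : ℕ) = 0 then a else p

lemma commPoly_headTuple {A : Type*} [NonUnitalNonAssocRing A] {a p : A}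
    (h : a * p - p * a = a) (m : ℕ) : commPoly (m + 1) (headTuple a p (m + 1)) = a := by
  induction m with
  | zero => rfl
  | succ m ih =>
    rw [commPoly_succ_succ]
    change commPoly (m + 1) (headTuple a p (m + 1)) * p -
      p * commPoly (m + 1) (headTuple a p (m + 1)) = a
    rw [ih, h]

/-- The sum over all slots of the commutator polynomial of `(a, p, …, p)`, the entries `a`
and `p` being replaced by `b` and `s`, respectively. -/
def leibnizSum {A : Type*} [NonUnitalNonAssocRing A] (a p b s : A) (m : ℕ) : A :=
  ∑ k : Fin (m + 1), commPoly (m + 1)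
    (Function.update (headTuple a p (m + 1)) k (headTuple b s (m + 1) k))

lemma leibnizSum_zero {A : Type*} [NonUnitalNonAssocRing A] (a p b s : A) :
    leibnizSum a p b s 0 = b := by
  simp [leibnizSum, commPoly, headTuple]

lemma leibnizSum_succ {A : Type*} [NonUnitalNonAssocRing A] {a p : A}
    (h : a * p - p * a = a) (b s : A) (m : ℕ) :
    leibnizSum a p b s (m + 1) =
      (leibnizSum a p b s m * p - p * leibnizSum a p b s m) + (a * s - s * a) := by
  rw [leibnizSum, Fin.sum_univ_castSucc]
  congr 1
  · rw [leibnizSum, Finset.sum_mul, Finset.mul_sum, ← Finset.sum_sub_distrib]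
    refine Finset.sum_congr rfl fun k _ => ?_
    have hu : (fun i : Fin (m + 1) => Function.update (headTuple a p (m + 2)) k.castSucc
        (headTuple b s (m + 2) k.castSucc) i.castSucc) =
        Function.update (headTuple a p (m + 1)) k (headTuple b s (m + 1) k) := by
      funext i
      by_cases hik : i = k
      · subst hik
        simp [headTuple]
      · simp [headTuple, hik]
    rw [commPoly_succ_succ, hu, Function.update_of_ne (Fin.castSucc_lt_last k).ne']
    rfl
  · have hu : (fun i : Fin (m + 1) => Function.update (headTuple a p (m + 2))
        (Fin.last (m + 1)) (headTuple b s (m + 2) (Fin.last (m + 1))) i.castSucc) =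
        headTuple a p (m + 1) := by
      funext i
      rw [Function.update_of_ne (Fin.castSucc_lt_last i).ne]
      rfl
    rw [commPoly_succ_succ, hu, commPoly_headTuple h, Function.update_self]
    rfl

lemma IsLieNDerivNU.eq_leibnizSum {𝒜 : NonUnitalSubalgebra ℂ (X →L[ℂ] X)} {m : ℕ}
    {L : ↥𝒜 →ₗ[ℂ] (X →L[ℂ] X)} (hL : IsLieNDerivNU 𝒜 (m + 1) L) {a p : 𝒜}
    (h : a * p - p * a = a) :
    L a = leibnizSum (a : X →L[ℂ] X) (p : X →L[ℂ] X) (L a) (L p) m := by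
  have key := hL (headTuple a p (m + 1))
  rw [commPoly_headTuple h] at key
  rw [leibnizSum]
  refine key.trans (Finset.sum_congr rfl fun k _ => ?_)
  have h₁ : (fun i => ((headTuple a p (m + 1) i : 𝒜) : X →L[ℂ] X)) =
      headTuple (a : X →L[ℂ] X) (p : X →L[ℂ] X) (m + 1) := by
    funext i
    simp only [headTuple]
    split_ifs <;> rfl
  have h₂ : L (headTuple a p (m + 1) k) = headTuple (L a) (L p) (m + 1) k := by
    simp only [headTuple]
    split_ifs <;> rfl
  rw [h₁, h₂]

/-- The linear map `x ↦ x ⊗ f` into an algebra containing all these operators. -/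
def smulRightMap (𝒜 : NonUnitalSubalgebra ℂ (X →L[ℂ] X)) (f : X →L[ℂ] ℂ)
    (hf : ∀ x, f.smulRight x ∈ 𝒜) : X →ₗ[ℂ] 𝒜 where
  toFun x := ⟨f.smulRight x, hf x⟩
  map_add' x y := by
    ext v
    simp
  map_smul' c x := Subtype.ext (ContinuousLinearMap.ext fun v => smul_comm (f v) c x)

/-- Blocks of `L (y ⊗ f)` and `L (z ⊗ f)` relative to the idempotent `y ⊗ f`, for
`f y = 1` and `f z = 0`. -/
lemma IsLieNDerivNU.rankOne_blocks {𝒜 : NonUnitalSubalgebra ℂ (X →L[ℂ] X)} {n : ℕ} (hn : 2 ≤ n)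
    {L : ↥𝒜 →ₗ[ℂ] (X →L[ℂ] X)} (hL : IsLieNDerivNU 𝒜 n L) {f : X →L[ℂ] ℂ}
    (hf : ∀ x, f.smulRight x ∈ 𝒜) {y z : X} (hy : f y = 1) (hz : f z = 0) :
    let S := L (smulRightMap 𝒜 f hf y)
    let B := L (smulRightMap 𝒜 f hf z)
    S z = f (S y) • z + f (S z) • y ∧ f (B y) = -f (S z) ∧
      ∀ w, f w = 0 → B w = f (B w) • y + f (S w) • z := by
  intro S B
  obtain ⟨m, rfl⟩ := Nat.exists_eq_add_of_le' hn
  set A : X →L[ℂ] X := f.smulRight z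
  set P : X →L[ℂ] X := f.smulRight y
  have hA : ∀ v, A v = f v • z := fun v => rfl
  have hP : ∀ v, P v = f v • y := fun v => rfl
  have hAP' : A * P - P * A = A := by
    ext v
    simp [hA, hP, hy, hz]
  have hAP : smulRightMap 𝒜 f hf z * smulRightMap 𝒜 f hf y -
      smulRightMap 𝒜 f hf y * smulRightMap 𝒜 f hf z = smulRightMap 𝒜 f hf z :=
    Subtype.ext hAP'
  have hB : B = leibnizSum A P B S (m + 1) := hL.eq_leibnizSum hAP
  have hstep := leibnizSum_succ hAP' B S
  have hq : ∀ k : ℕ, leibnizSum A P B S k y - f (leibnizSum A P B S k y) • y =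
      (B y - f (B y) • y) + (k : ℂ) • (f (S y) • z - S z + f (S z) • y) := by
    intro k
    induction k with
    | zero => simp [leibnizSum_zero]
    | succ k ih =>
      rw [hstep]
      set G := leibnizSum A P B S k
      have e : (G * P - P * G + (A * S - S * A)) y =
          (G y - f (G y) • y) + (f (S y) • z - S z) := by
        simp [hA, hP, hy]
      rw [e, ih]
      simp only [map_add, map_sub, map_smul, smul_eq_mul, hy, hz]
      push_cast
      module
  refine ⟨?_, ?_, fun w hw => ?_⟩
  · have h := hq (m + 1)
    rw [← hB, left_eq_add, smul_eq_zero] at h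
    have h' := h.resolve_left (by exact_mod_cast m.succ_ne_zero)
    linear_combination (norm := module) -h'
  · rw [hB, hstep]
    simp [hA, hP, hy, hz]
  · have h : B w = -f (leibnizSum A P B S m w) • y + f (S w) • z := by
      have e := hB.trans (hstep m)
      set G := leibnizSum A P B S m
      rw [e]
      simp [hA, hP, hw]
    have h' : f (B w) = -f (leibnizSum A P B S m w) := by
      rw [h]
      simp [hy, hz]
    rw [h', ← h]

/-- A linear map `ℓ` into `B(X)` with the block structure of `x ↦ L (x ⊗ f)` satisfies
`ℓ x w = r f(x) w + φ(w) x` for `w` in the kernel of `f`, where `r = f (ℓ y y)` for every `y`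
with `f y = 1`. -/
lemma exists_scalar_of_blocks {f : X →L[ℂ] ℂ} (hf : f ≠ 0) (ℓ : X →ₗ[ℂ] (X →L[ℂ] X))
    (hker : ∀ z, ∃ w, f w = 0 ∧ ∀ c : ℂ, w ≠ c • z)
    (h₁ : ∀ y z, f y = 1 → f z = 0 → ℓ y z = f (ℓ y y) • z + f (ℓ y z) • y)
    (h₂ : ∀ y z, f y = 1 → f z = 0 → f (ℓ z y) = -f (ℓ y z))
    (h₃ : ∀ y z w, f y = 1 → f z = 0 → f w = 0 → ℓ z w = f (ℓ z w) • y + f (ℓ y w) • z) :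
    ∃ r : ℂ, (∀ y, f y = 1 → f (ℓ y y) = r) ∧
      ∀ w, f w = 0 → ∃ c : ℂ, ∀ x, ℓ x w = (r * f x) • w + c • x := by
  have hdiff : ∀ y z w, f y = 1 → f z = 0 → f w = 0 →
      f (ℓ z w) • z + f (ℓ z z) • w = 0 := by
    intro y z w hy hz hw
    have hyz : f (y + z) = 1 := by simp [hy, hz]
    have e := h₁ (y + z) w hyz hw
    have e₁ := h₁ y w hy hw
    have e₂ := h₂ y z hy hz
    have e₃ := h₃ y z w hy hz hw
    simp only [map_add, add_apply, e₂] at e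
    linear_combination (norm := module) e₁ + e₃ - e
  obtain ⟨y, hy⟩ : ∃ y, f y = 1 := by
    obtain ⟨v, hv⟩ := DFunLike.ne_iff.mp hf
    exact ⟨(f v)⁻¹ • v, by simpa using inv_mul_cancel₀ hv⟩
  have hzz : ∀ z, f z = 0 → f (ℓ z z) = 0 := by
    intro z hz
    obtain ⟨w, hw, hwz⟩ := hker z
    by_contra h
    refine hwz (-((f (ℓ z z))⁻¹ * f (ℓ z w))) ?_
    have e := hdiff y z w hy hz hw
    have : w = (f (ℓ z z))⁻¹ • (f (ℓ z z) • w) := by rw [smul_smul, inv_mul_cancel₀ h, one_smul]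
    exact this.trans (by rw [eq_neg_of_add_eq_zero_right e, smul_neg, smul_smul, neg_smul])
  have hzw : ∀ z w, f z = 0 → f w = 0 → f (ℓ z w) = 0 := by
    intro z w hz hw
    have e := hdiff y z w hy hz hw
    rw [hzz z hz, zero_smul, add_zero, smul_eq_zero] at e
    rcases e with e | rfl
    · exact e
    · simp
  refine ⟨f (ℓ y y), fun x hx => ?_, fun w hw => ⟨f (ℓ y w), fun x => ?_⟩⟩
  · have hz : f (x - y) = 0 := by simp [hx, hy]
    have e₁ := h₂ y (x - y) hy hz
    have e₂ := hzz (x - y) hz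
    simp only [map_sub, sub_apply] at e₁ e₂
    linear_combination e₁ + e₂
  · have hz : f (x - f x • y) = 0 := by simp [hy]
    have e₁ := h₁ y w hy hw
    have e₂ := h₃ y _ w hy hz hw
    rw [hzw _ w hz hw] at e₂
    simp only [map_sub, map_smul, sub_apply, smul_apply] at e₂
    linear_combination (norm := module) e₂ + f x • e₁

lemma IsLieNDerivNU.exists_hAux_eq {𝒜 : NonUnitalSubalgebra ℂ (X →L[ℂ] X)} {n : ℕ} (hn : 2 ≤ n)
    {L : ↥𝒜 →ₗ[ℂ] (X →L[ℂ] X)} (hL : IsLieNDerivNU 𝒜 n L) {f : X →L[ℂ] ℂ}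
    (hf : ∀ x, f.smulRight x ∈ 𝒜) (hker : ∀ z, ∃ w, f w = 0 ∧ ∀ c : ℂ, w ≠ c • z) :
    ∃ r : ℂ, (∀ x, hAux 𝒜 L x f = r * f x) ∧
      ∀ w, f w = 0 → ∃ c : ℂ, ∀ x,
        L (smulRightMap 𝒜 f hf x) w = (r * f x) • w + c • x := by
  by_cases hf0 : f = 0
  · subst hf0
    refine ⟨0, fun x => by simp [hAux], fun w _ => ⟨0, fun x => ?_⟩⟩
    have : smulRightMap 𝒜 0 hf x = 0 := by
      ext v
      simp [smulRightMap]
    simp [this]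
  · obtain ⟨r, hr, hφ⟩ := exists_scalar_of_blocks hf0 (L ∘ₗ smulRightMap 𝒜 f hf) hker
      (fun y z hy hz => (hL.rankOne_blocks hn hf hy hz).1)
      (fun y z hy hz => (hL.rankOne_blocks hn hf hy hz).2.1)
      (fun y z w hy hz => (hL.rankOne_blocks hn hf hy hz).2.2 w)
    refine ⟨r, fun x => ?_, hφ⟩
    by_cases hx : f x = 0
    · simp [hAux, hx]
    · have e := hr ((f x)⁻¹ • x) (by simp [hx])
      simp only [LinearMap.coe_comp, Function.comp_apply, map_smul,
        smul_apply, smul_eq_mul] at e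
      rw [hAux, if_neg hx, dif_pos (hf x), ← e]
      simp only [smulRightMap, LinearMap.coe_mk, AddHom.coe_mk]
      field_simp

lemma exists_eq_one_and_ne_zero {f₁ f₂ : X →L[ℂ] ℂ} {y₁ y₂ : X} (h₁ : f₁ y₁ = 1)
    (h₂ : f₂ y₂ = 1) : ∃ y, f₁ y = 1 ∧ f₂ y ≠ 0 := by
  by_cases h : f₂ y₁ = 0
  · by_cases h' : f₁ y₂ = 0
    · exact ⟨y₁ + y₂, by simp [h₁, h'], by simp [h, h₂]⟩
    · exact ⟨(f₁ y₂)⁻¹ • y₂, by simp [h'], by simp [h₂, h']⟩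
  · exact ⟨y₁, h₁, h⟩

lemma exists_ne_smul_of_linearIndependent {u v : X} (h : LinearIndependent ℂ ![u, v]) (z : X) :
    (∀ c : ℂ, u ≠ c • z) ∨ ∀ c : ℂ, v ≠ c • z := by
  by_contra! hcon
  obtain ⟨⟨c, hc⟩, d, hd⟩ := hcon
  rw [LinearIndependent.pair_iff] at h
  obtain ⟨hd0, hc0⟩ := h d (-c) (by rw [hc, hd]; module)
  have hu : u = 0 := by rw [hc, neg_eq_zero.mp hc0, zero_smul]
  exact one_ne_zero (h 1 0 (by simp [hu])).1

end LieDerivationRankOne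

/-- (Lemma 3.9 of the paper.)  For nonzero `f₁, f₂ ∈ X₋^⊥(𝒜)` and
`y₁, y₂` with `fⱼ(yⱼ) = 1`, the difference `Φ_{f₁,y₁} - Φ_{f₂,y₂}` is a scalar multiple
of the identity, where `Φ_{f,y} x = (L(x ⊗ f) - h(x,f) I) y`. -/
theorem statement11 {X : Type*} [NormedAddCommGroup X] [NormedSpace ℂ X] [CompleteSpace X]
    (hdim : 2 < Module.rank ℂ X)
    (𝒩 : Set (Submodule ℂ X)) (hnest : IsNest 𝒩)
    (hnontrivial : 𝒩 ≠ ({⊥, ⊤} : Set (Submodule ℂ X)))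
    (hdimann : 1 < Module.rank ℂ ↥(annihilatorOf (nestXminus 𝒩)))
    (𝒜 : NonUnitalSubalgebra ℂ (X →L[ℂ] X))
    (h𝒜 : ∀ T ∈ 𝒜, T ∈ nestAlgebra 𝒩)
    -- (♠1) : `X₋^⊥(𝒜) ≠ {0}` and `X₋^⊥(𝒜)` is a linear subspace of `X*`
    (hS1 : XannA 𝒩 𝒜 ≠ ({0} : Set (X →L[ℂ] ℂ)) ∧
      ∃ p : Submodule ℂ (X →L[ℂ] ℂ), (p : Set (X →L[ℂ] ℂ)) = XannA 𝒩 𝒜)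
    -- (♠2) : for each `f ∈ X₋^⊥(𝒜)` there exists `y ∈ X \ X₋` with `y ⊗ f ∈ 𝒜`
    (hS2 : ∀ f ∈ XannA 𝒩 𝒜, ∃ y : X, y ∉ nestXminus 𝒩 ∧ f.smulRight y ∈ 𝒜)
    -- (♠3) : `x ⊗ f ∈ 𝒜` for every `x ∈ X(𝒜)` and `f ∈ X₋^⊥(𝒜)`
    (hS3 : ∀ x ∈ XofA 𝒜, ∀ f ∈ XannA 𝒩 𝒜, f.smulRight x ∈ 𝒜)
    -- (♠4) : `dim(X(𝒜) ∩ ker fᵢ) > 1` and `X(𝒜) ∩ ker f₁ ∩ ker f₂ ≠ {0}`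
    (hS4 : ∀ f₁ ∈ XannA 𝒩 𝒜, ∀ f₂ ∈ XannA 𝒩 𝒜,
      (∃ u v : X, u ∈ XofA 𝒜 ∧ f₁ u = 0 ∧ v ∈ XofA 𝒜 ∧ f₁ v = 0 ∧
        LinearIndependent ℂ ![u, v]) ∧
      (∃ u v : X, u ∈ XofA 𝒜 ∧ f₂ u = 0 ∧ v ∈ XofA 𝒜 ∧ f₂ v = 0 ∧
        LinearIndependent ℂ ![u, v]) ∧
      (∃ z : X, z ≠ 0 ∧ z ∈ XofA 𝒜 ∧ f₁ z = 0 ∧ f₂ z = 0))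
    -- (♠5) : `X(𝒜) = X`
    (hS5 : XofA 𝒜 = Set.univ)
    (n : ℕ) (hn : 2 ≤ n)
    (L : ↥𝒜 →ₗ[ℂ] (X →L[ℂ] X)) (hL : IsLieNDerivNU 𝒜 n L) :
    ∀ f₁ ∈ XannA 𝒩 𝒜, ∀ f₂ ∈ XannA 𝒩 𝒜, f₁ ≠ 0 → f₂ ≠ 0 →
      ∀ y₁ y₂ : X, f₁ y₁ = 1 → f₂ y₂ = 1 →
      ∃ c : ℂ, ∀ x : X, ∀ (hm₁ : f₁.smulRight x ∈ 𝒜) (hm₂ : f₂.smulRight x ∈ 𝒜),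
        ((L ⟨f₁.smulRight x, hm₁⟩) y₁ - hAux 𝒜 L x f₁ • y₁) -
          ((L ⟨f₂.smulRight x, hm₂⟩) y₂ - hAux 𝒜 L x f₂ • y₂) = c • x := by
  intro f₁ hf₁ f₂ hf₂ _ _ y₁ y₂ hy₁ hy₂
  obtain ⟨p, hp⟩ := hS1.2
  have hmem : ∀ f ∈ XannA 𝒩 𝒜, ∀ x, f.smulRight x ∈ 𝒜 := fun f hf x =>
    hS3 x (hS5 ▸ Set.mem_univ x) f hf
  have hker : ∀ f ∈ XannA 𝒩 𝒜, ∀ z, ∃ w, f w = 0 ∧ ∀ c : ℂ, w ≠ c • z := by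
    intro f hf z
    obtain ⟨⟨u, v, -, hu, -, hv, huv⟩, -⟩ := hS4 f hf f hf
    rcases exists_ne_smul_of_linearIndependent huv z with h | h
    · exact ⟨u, hu, h⟩
    · exact ⟨v, hv, h⟩
  obtain ⟨y, hy, hb⟩ := exists_eq_one_and_ne_zero hy₁ hy₂
  set b := f₂ y with hb_def
  have hf₃ : b • f₁ - f₂ ∈ XannA 𝒩 𝒜 := by
    rw [← hp] at hf₁ hf₂ ⊢
    exact p.sub_mem (p.smul_mem b hf₁) hf₂
  obtain ⟨r₁, hr₁, hw₁⟩ := hL.exists_hAux_eq hn (hmem _ hf₁) (hker _ hf₁)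
  obtain ⟨r₂, hr₂, hw₂⟩ := hL.exists_hAux_eq hn (hmem _ hf₂) (hker _ hf₂)
  obtain ⟨r₃, -, hw₃⟩ := hL.exists_hAux_eq hn (hmem _ hf₃) (hker _ hf₃)
  set ℓ₁ := fun x => L (smulRightMap 𝒜 f₁ (hmem _ hf₁) x)
  set ℓ₂ := fun x => L (smulRightMap 𝒜 f₂ (hmem _ hf₂) x)
  have hℓ : ∀ x v, L (smulRightMap 𝒜 (b • f₁ - f₂) (hmem _ hf₃) x) v =
      b • ℓ₁ x v - ℓ₂ x v := by
    intro x v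
    have : smulRightMap 𝒜 (b • f₁ - f₂) (hmem _ hf₃) x =
        b • smulRightMap 𝒜 f₁ (hmem _ hf₁) x - smulRightMap 𝒜 f₂ (hmem _ hf₂) x := by
      ext v
      simp [smulRightMap, sub_smul, mul_smul]
    rw [this, map_sub, map_smul]
    rfl
  have hr : ∀ x, r₃ * (b * f₁ x - f₂ x) = b * (r₁ * f₁ x) - r₂ * f₂ x := by
    obtain ⟨-, -, w, hw0, -, hwf₁, hwf₂⟩ := hS4 f₁ hf₁ f₂ hf₂
    obtain ⟨c₁, hc₁⟩ := hw₁ w hwf₁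
    obtain ⟨c₂, hc₂⟩ := hw₂ w hwf₂
    obtain ⟨c₃, hc₃⟩ := hw₃ w (by simp [hwf₁, hwf₂])
    have e : ∀ x, (r₃ * (b * f₁ x - f₂ x) - (b * (r₁ * f₁ x) - r₂ * f₂ x)) • w =
        (b * c₁ - c₂ - c₃) • x := by
      intro x
      have e₃ := hc₃ x
      rw [hℓ] at e₃
      simp only [sub_apply, smul_apply,
        smul_eq_mul] at e₃
      linear_combination (norm := module) b • hc₁ x - hc₂ x - e₃
    have hk : b * c₁ - c₂ - c₃ = 0 := by
      by_contra hk
      obtain ⟨x, -, hx⟩ := hker f₁ hf₁ w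
      refine hx ((b * c₁ - c₂ - c₃)⁻¹ *
        (r₃ * (b * f₁ x - f₂ x) - (b * (r₁ * f₁ x) - r₂ * f₂ x))) ?_
      rw [mul_smul, e, smul_smul, inv_mul_cancel₀ hk, one_smul]
    intro x
    have ex := e x
    rw [hk, zero_smul, smul_eq_zero] at ex
    exact sub_eq_zero.mp (ex.resolve_right hw0)
  obtain ⟨d₁, hd₁⟩ := hw₁ (y₁ - y) (by simp [hy₁, hy])
  obtain ⟨d₂, hd₂⟩ := hw₂ (y₂ - b⁻¹ • y) (by simp [hy₂, ← hb_def, hb])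
  obtain ⟨d₃, hd₃⟩ := hw₃ y (by simp [hy, ← hb_def])
  refine ⟨d₁ - d₂ + b⁻¹ * d₃, fun x hm₁ hm₂ => ?_⟩
  have e₁ : ℓ₁ x (y₁ - y) = _ := hd₁ x
  have e₂ : ℓ₂ x (y₂ - b⁻¹ • y) = _ := hd₂ x
  have e₃ := hd₃ x
  rw [hℓ] at e₃
  simp only [sub_apply, smul_apply, smul_eq_mul] at e₃
  rw [hr x] at e₃
  have e₃' : ℓ₁ x y - b⁻¹ • ℓ₂ x y =
      (r₁ * f₁ x) • y - (b⁻¹ * (r₂ * f₂ x)) • y + (b⁻¹ * d₃) • x := by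
    have := congrArg (b⁻¹ • ·) e₃
    simp only [smul_sub, smul_add, smul_smul, inv_mul_cancel_left₀ hb,
      inv_mul_cancel₀ hb, one_smul, sub_smul] at this
    exact this
  rw [hr₁, hr₂]
  change (ℓ₁ x y₁ - _) - (ℓ₂ x y₂ - _) = _
  rw [map_sub] at e₁ e₂
  rw [map_smul] at e₂
  linear_combination (norm := module) e₁ - e₂ + e₃'
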